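/- arXiv:1402.1373 — 5 statements merged into one kernel-verified Lean document; each statement's English description precedes it below -/
import Mathlib

section
/- Every eigenvalue of R(b) is either equal to zero or equal to n(A1+A2)/2 ± h(b), where h(b) = (1/2)·√( (n² − 4·C(n,2))·(A1+A2)² + κ(b) ), C(n,2) = n(n−1)/2 is the binomial coefficient, and κ(b) = 4·Σ_{p<q} ( A1² + A2² + 2A1A2·cos(2π·φ_{pq}·(b·s0)) ). (Proposition 1, second part.) -/
/-- The extrapolated visibility matrix `R(b)` of a regularly-spaced array. -/
noncomputable def Rmat (n : ℕ) (φ : Fin n → ℤ) (A1 A2 l0 m0 : ℝ) (b : ℝ × ℝ) :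
    Matrix (Fin n) (Fin n) ℂ :=
  Matrix.of fun p q =>
    (A1 : ℂ) + (A2 : ℂ) *
      Complex.exp (-2 * (Real.pi : ℂ) * Complex.I * ((φ q - φ p : ℤ) : ℂ) *
        ((b.1 * l0 + b.2 * m0 : ℝ) : ℂ))

/-!
`R(b)` is Hermitian of rank at most two, because each of its two terms is a rank-one matrix in
`(p, q)`. Hence at most one further eigenvalue `ν` accompanies a nonzero eigenvalue `μ`, so
`tr R = μ + ν` and `∑ |r_{pq}|² = tr R² = μ² + ν²`, which gives
`(2μ - tr R)² = (μ - ν)² = 2 ∑ |r_{pq}|² - (tr R)²`. The diagonal entries are all `A1 + A2`, and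
the off-diagonal part of the sum is `κ(b) / 2`, so the right-hand side is `(2 h(b))²`.
-/

open Matrix Finset

section Sums

variable {ι R : Type*}

theorem sum_sum_eq_sum_diag_add_two_mul_sum_lt [Fintype ι] [LinearOrder ι]
    [NonAssocSemiring R] {f : ι → ι → R} (hf : ∀ p q, f p q = f q p) :
    ∑ p, ∑ q, f p q = ∑ p, f p p + 2 * ∑ p, ∑ q, if p < q then f p q else 0 := by
  have split_entry (p q : ι) : f p q = (if p = q then f p q else 0) +
      ((if p < q then f p q else 0) + if q < p then f q p else 0) := by
    rcases lt_trichotomy p q with h | rfl | h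
    · simp [h, h.ne, h.not_gt]
    · simp
    · simp [h, h.ne', h.not_gt, hf p q]
  calc ∑ p, ∑ q, f p q
      = ∑ p, f p p + (∑ p, ∑ q, (if p < q then f p q else 0) +
          ∑ p, ∑ q, if q < p then f q p else 0) := by
        rw [sum_congr rfl fun p _ => sum_congr rfl fun q _ => split_entry p q]
        simp only [sum_add_distrib, sum_ite_eq, mem_univ, if_true]
    _ = ∑ p, f p p + 2 * ∑ p, ∑ q, if p < q then f p q else 0 := by
        rw [sum_comm (f := fun p q => if q < p then f q p else 0), two_mul]

theorem sum_pow_eq_sum_pow_of_card_ne_zero_le_one [Semiring R] [DecidableEq R] {s : Finset ι}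
    {x : ι → R} (hx : #{i ∈ s | x i ≠ 0} ≤ 1) {k : ℕ} (hk : k ≠ 0) :
    ∑ i ∈ s, x i ^ k = (∑ i ∈ s, x i) ^ k := by
  by_cases all_zero : ∀ i ∈ s, x i = 0
  · rw [sum_eq_zero all_zero, zero_pow hk]
    exact sum_eq_zero fun i hi => by rw [all_zero i hi, zero_pow hk]
  · push Not at all_zero
    obtain ⟨i, hi, hxi⟩ := all_zero
    have others_zero (j : ι) (hj : j ∈ s) (hji : j ≠ i) : x j = 0 := by
      by_contra hxj
      exact hji (card_le_one.mp hx j (mem_filter.mpr ⟨hj, hxj⟩) i (mem_filter.mpr ⟨hi, hxi⟩))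
    rw [sum_eq_single_of_mem i hi others_zero, sum_eq_single_of_mem i hi fun j hj hji => by
      rw [others_zero j hj hji, zero_pow hk]]

theorem sq_two_mul_sub_sum_of_card_ne_zero_le_two [Fintype ι] [CommRing R] [DecidableEq R]
    {x : ι → R} (hx : #{i | x i ≠ 0} ≤ 2) {i : ι} (hi : x i ≠ 0) :
    (2 * x i - ∑ j, x j) ^ 2 = 2 * ∑ j, x j ^ 2 - (∑ j, x j) ^ 2 := by
  classical
  have card_others : #{j ∈ univ.erase i | x j ≠ 0} ≤ 1 := by
    rw [filter_erase, card_erase_of_mem (by simpa using hi)]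
    omega
  have sum_sq_others := sum_pow_eq_sum_pow_of_card_ne_zero_le_one card_others two_ne_zero
  rw [← add_sum_erase _ x (mem_univ i), ← add_sum_erase _ (x · ^ 2) (mem_univ i), sum_sq_others]
  ring

end Sums

section Hermitian

variable {ι 𝕜 : Type*} [Fintype ι] [RCLike 𝕜] {M : Matrix ι ι 𝕜}

theorem trace_mul_self_eq_sum_sq_norm (hM : M.IsHermitian) :
    (M * M).trace = ((∑ p, ∑ q, ‖M p q‖ ^ 2 : ℝ) : 𝕜) := by
  simp only [trace, diag_apply, mul_apply, RCLike.ofReal_sum]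
  refine sum_congr rfl fun p _ => sum_congr rfl fun q _ => ?_
  rw [← hM.apply q p, RCLike.star_def, RCLike.mul_conj, RCLike.ofReal_pow]

theorem trace_mul_self_eq_sum_sq_eigenvalues [DecidableEq ι] (hM : M.IsHermitian) :
    (M * M).trace = ((∑ i, hM.eigenvalues i ^ 2 : ℝ) : 𝕜) := by
  conv_lhs => rw [hM.spectral_theorem, ← map_mul, diagonal_mul_diagonal]
  rw [Unitary.conjStarAlgAut_apply, trace_mul_cycle, Unitary.coe_star_mul_self, one_mul,
    trace_diagonal]
  simp [sq]

theorem sum_sq_eigenvalues_eq_sum_sq_norm [DecidableEq ι] (hM : M.IsHermitian) :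
    ∑ i, hM.eigenvalues i ^ 2 = ∑ p, ∑ q, ‖M p q‖ ^ 2 :=
  RCLike.ofReal_injective (K := 𝕜)
    ((trace_mul_self_eq_sum_sq_eigenvalues hM).symm.trans (trace_mul_self_eq_sum_sq_norm hM))

theorem eq_zero_or_eq_of_mem_spectrum_of_rank_le_two [DecidableEq ι] (hM : M.IsHermitian)
    (hrank : M.rank ≤ 2) {μ : 𝕜} (hμ : μ ∈ spectrum 𝕜 M) {t d : ℝ} (ht : M.trace = t)
    (hd : d = 2 * ∑ p, ∑ q, ‖M p q‖ ^ 2 - t ^ 2) :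
    μ = 0 ∨ μ = ((t / 2 + 1 / 2 * √d : ℝ) : 𝕜) ∨ μ = ((t / 2 - 1 / 2 * √d : ℝ) : 𝕜) := by
  rw [hM.spectrum_eq_image_range] at hμ
  obtain ⟨_, ⟨i, rfl⟩, rfl⟩ := hμ
  rcases eq_or_ne (hM.eigenvalues i) 0 with hi | hi
  · simp [hi]
  have sum_eigenvalues : ∑ j, hM.eigenvalues j = t := by
    rw [hM.trace_eq_sum_eigenvalues] at ht
    exact_mod_cast ht
  have card_eigenvalues : #{j | hM.eigenvalues j ≠ 0} ≤ 2 := by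
    rwa [hM.rank_eq_card_non_zero_eigs, Fintype.card_subtype] at hrank
  have sq_gap : (2 * hM.eigenvalues i - t) ^ 2 = d := by
    rw [hd, ← sum_sq_eigenvalues_eq_sum_sq_norm hM, ← sum_eigenvalues]
    exact sq_two_mul_sub_sum_of_card_ne_zero_le_two card_eigenvalues hi
  simp only [RCLike.ofReal_inj]
  right
  rw [← sq_gap, Real.sqrt_sq_eq_abs]
  rcases abs_choice (2 * hM.eigenvalues i - t) with h | h <;> rw [h]
  · left; ring
  · right; ring

end Hermitian

section TwoSources

variable {ι : Type*}

/-- The visibility matrix of two point sources of intensities `A` and `B`: the first at the phase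
centre, the second seen by antenna `p` with phase `θ p`. -/
noncomputable def twoSourceMatrix (θ : ι → ℝ) (A B : ℝ) : Matrix ι ι ℂ :=
  Matrix.of fun p q => (A : ℂ) + B * Complex.exp ((θ p - θ q : ℝ) * Complex.I)

theorem twoSourceMatrix_apply_self (θ : ι → ℝ) (A B : ℝ) (p : ι) :
    twoSourceMatrix θ A B p p = ((A + B : ℝ) : ℂ) := by
  simp [twoSourceMatrix]

theorem isHermitian_twoSourceMatrix (θ : ι → ℝ) (A B : ℝ) :
    (twoSourceMatrix θ A B).IsHermitian := by
  ext p q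
  simp [twoSourceMatrix, ← Complex.exp_conj, ← neg_mul]

theorem rank_twoSourceMatrix_le [Fintype ι] (θ : ι → ℝ) (A B : ℝ) :
    (twoSourceMatrix θ A B).rank ≤ 2 := by
  let V : Matrix ι (Fin 2) ℂ := Matrix.of fun p => ![A, B * Complex.exp (θ p * Complex.I)]
  let W : Matrix (Fin 2) ι ℂ := Matrix.of ![1, fun q => Complex.exp (-θ q * Complex.I)]
  have factorization : twoSourceMatrix θ A B = V * W := by
    ext p q
    simp [twoSourceMatrix, V, W, mul_apply, Fin.sum_univ_two, mul_assoc, ← Complex.exp_add,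
      sub_eq_add_neg, add_mul]
  rw [factorization]
  exact (rank_mul_le_left V W).trans V.rank_le_card_width

theorem trace_twoSourceMatrix [Fintype ι] (θ : ι → ℝ) (A B : ℝ) :
    (twoSourceMatrix θ A B).trace = ((Fintype.card ι * (A + B) : ℝ) : ℂ) := by
  simp [trace, twoSourceMatrix_apply_self, mul_add]

theorem sq_norm_add_mul_exp_mul_I (A B α : ℝ) :
    ‖(A : ℂ) + B * Complex.exp (α * Complex.I)‖ ^ 2 = A ^ 2 + B ^ 2 + 2 * A * B * Real.cos α := by
  rw [Complex.sq_norm, Complex.normSq_apply]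
  simp only [Complex.add_re, Complex.add_im, Complex.re_ofReal_mul, Complex.im_ofReal_mul,
    Complex.ofReal_re, Complex.ofReal_im, Complex.exp_ofReal_mul_I_re,
    Complex.exp_ofReal_mul_I_im]
  linear_combination B ^ 2 * Real.sin_sq_add_cos_sq α

theorem sum_sq_norm_twoSourceMatrix [Fintype ι] [LinearOrder ι] (θ : ι → ℝ) (A B : ℝ) :
    ∑ p, ∑ q, ‖twoSourceMatrix θ A B p q‖ ^ 2 =
      Fintype.card ι * (A + B) ^ 2 + 2 * ∑ p, ∑ q, if p < q then
        A ^ 2 + B ^ 2 + 2 * A * B * Real.cos (θ q - θ p) else 0 := by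
  have sq_norm_entry (p q : ι) : ‖twoSourceMatrix θ A B p q‖ ^ 2 =
      A ^ 2 + B ^ 2 + 2 * A * B * Real.cos (θ q - θ p) := by
    rw [← Real.cos_neg, neg_sub]
    exact sq_norm_add_mul_exp_mul_I A B (θ p - θ q)
  rw [sum_sum_eq_sum_diag_add_two_mul_sum_lt fun p q => by
    rw [← (isHermitian_twoSourceMatrix θ A B).apply, norm_star]]
  simp only [twoSourceMatrix_apply_self, Complex.norm_real, Real.norm_eq_abs, sq_abs, sum_const,
    card_univ, nsmul_eq_mul, sq_norm_entry]

theorem eigenvalues_Rmat_general [Fintype ι] [LinearOrder ι] (θ : ι → ℝ) (A1 A2 : ℝ) {κ h : ℝ}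
    (hκ : κ = 4 * ∑ p, ∑ q, if p < q then
      A1 ^ 2 + A2 ^ 2 + 2 * A1 * A2 * Real.cos (θ q - θ p) else 0)
    (hh : h = 1 / 2 * √(((Fintype.card ι : ℝ) ^ 2 - 4 * ((Fintype.card ι).choose 2 : ℝ)) *
      (A1 + A2) ^ 2 + κ))
    {μ : ℂ} (hμ : μ ∈ spectrum ℂ (twoSourceMatrix θ A1 A2)) :
    μ = 0 ∨ μ = ((Fintype.card ι * (A1 + A2) / 2 + h : ℝ) : ℂ) ∨
      μ = ((Fintype.card ι * (A1 + A2) / 2 - h : ℝ) : ℂ) := by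
  rw [hh]
  refine eq_zero_or_eq_of_mem_spectrum_of_rank_le_two (isHermitian_twoSourceMatrix θ A1 A2)
    (rank_twoSourceMatrix_le θ A1 A2) hμ (trace_twoSourceMatrix θ A1 A2) ?_
  rw [sum_sq_norm_twoSourceMatrix, hκ, Nat.cast_choose_two]
  ring

end TwoSources

/-- The phase `2π φ_p x` with which the antenna at position `φ p` sees a point source, where
`x = b·s0`. -/
noncomputable def antennaPhase {ι : Type*} (φ : ι → ℤ) (x : ℝ) (p : ι) : ℝ :=
  2 * Real.pi * φ p * x

theorem antennaPhase_sub {ι : Type*} (φ : ι → ℤ) (x : ℝ) (p q : ι) :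
    antennaPhase φ x q - antennaPhase φ x p = 2 * Real.pi * ((φ q - φ p : ℤ) : ℝ) * x := by
  simp only [antennaPhase, Int.cast_sub]
  ring

theorem Rmat_eq_twoSourceMatrix (n : ℕ) (φ : Fin n → ℤ) (A1 A2 l0 m0 : ℝ) (b : ℝ × ℝ) :
    Rmat n φ A1 A2 l0 m0 b =
      twoSourceMatrix (antennaPhase φ (b.1 * l0 + b.2 * m0)) A1 A2 := by
  ext p q
  simp only [Rmat, twoSourceMatrix, Matrix.of_apply, antennaPhase_sub]
  congr 3
  push_cast
  ring

/-- Proposition 1 (second part): every eigenvalue of `R(b)` is either `0` or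
`n(A1+A2)/2 ± h(b)`, where `h(b) = (1/2)·√((n² − 4·C(n,2))·(A1+A2)² + κ(b))` and
`κ(b) = 4·Σ_{p<q} (A1² + A2² + 2A1A2·cos(2π·φ_{pq}·(b·s0)))`. -/
theorem eigenvalues_Rmat (n : ℕ) (hn : 2 ≤ n) (φ : Fin n → ℤ) (hφ : StrictMono φ)
    (A1 A2 l0 m0 : ℝ) (hA1 : A1 = 1) (hA2 : 0 < A2) (hA2' : A2 < 1)
    (hs0 : (l0, m0) ≠ (0, 0)) (b : ℝ × ℝ)
    (κ : ℝ)
    (hκ : κ = 4 * ∑ p : Fin n, ∑ q : Fin n, if p < q then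
        A1 ^ 2 + A2 ^ 2 +
          2 * A1 * A2 * Real.cos (2 * Real.pi * ((φ q - φ p : ℤ) : ℝ) * (b.1 * l0 + b.2 * m0))
      else 0)
    (h : ℝ)
    (hh : h = (1 / 2) * Real.sqrt (((n : ℝ) ^ 2 - 4 * (n.choose 2 : ℝ)) * (A1 + A2) ^ 2 + κ))
    (μ : ℂ) (hμ : μ ∈ spectrum ℂ (Rmat n φ A1 A2 l0 m0 b)) :
    μ = 0 ∨ μ = (((n : ℝ) * (A1 + A2) / 2 + h : ℝ) : ℂ) ∨
      μ = (((n : ℝ) * (A1 + A2) / 2 - h : ℝ) : ℂ) := by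
  rw [Rmat_eq_twoSourceMatrix] at hμ
  simpa using eigenvalues_Rmat_general _ A1 A2 (by simpa only [antennaPhase_sub] using hκ)
    (by simpa using hh) hμ
end

section
/- Every 3×3 principal submatrix of R(b) is singular: for any b ∈ ℝ² and any indices 1 ≤ i < j < k ≤ n, the determinant of the 3×3 matrix with rows and columns of R(b) indexed by (i, j, k) is zero. (Lemma 2.) -/
/-!
With `t = b · s0` and the steering vector `a p = exp (-2πi φ_p t)`, each entry factors as
`r_{pq}(b) = A1 + A2 * conj (a p) * a q`. Hence `R(b)` is a sum of two rank-one matrices, one per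
source, and every minor of `R(b)` of order at least three vanishes.
-/

open Matrix

section Rank

variable {ι m n R : Type*} [Fintype ι]

theorem sum_vecMulVec_eq_transpose_mul [NonUnitalNonAssocSemiring R]
    (u : ι → m → R) (v : ι → n → R) :
    ∑ i, vecMulVec (u i) (v i) = (of u)ᵀ * of v := by
  ext p q
  simp [Matrix.sum_apply, mul_apply, vecMulVec_apply]

variable [Fintype n]

theorem rank_sum_vecMulVec_le [CommSemiring R] [StrongRankCondition R]
    (u : ι → m → R) (v : ι → n → R) :
    (∑ i, vecMulVec (u i) (v i)).rank ≤ Fintype.card ι := by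
  rw [sum_vecMulVec_eq_transpose_mul]
  exact (rank_mul_le_left _ _).trans (rank_le_card_width _)

theorem det_submatrix_eq_zero_of_rank_lt_card [CommRing R] [IsDomain R] [DecidableEq ι]
    {A : Matrix m n R} (h : A.rank < Fintype.card ι) (r : ι → m) (c : ι → n) :
    (A.submatrix r c).det = 0 := by
  by_contra hdet
  exact h.not_ge ((rank_of_det_ne_zero hdet).symm.trans_le (rank_submatrix_le A r c))

end Rank

/-- The response of an array with antenna positions `φ` to a unit source whose phase per unit of
position is `-2πt`; in `R(b)` the parameter `t` is `b · s0`. -/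
noncomputable def steeringVector {ι : Type*} (φ : ι → ℤ) (t : ℝ) (p : ι) : ℂ :=
  Complex.exp (-2 * Real.pi * Complex.I * φ p * t)

theorem star_steeringVector_mul_steeringVector {ι : Type*} (φ : ι → ℤ) (t : ℝ) (p q : ι) :
    star (steeringVector φ t p) * steeringVector φ t q =
      Complex.exp (-2 * Real.pi * Complex.I * (φ q - φ p : ℤ) * t) := by
  simp only [steeringVector, Complex.star_def, ← Complex.exp_conj, ← Complex.exp_add]
  congr 1
  simp only [map_mul, map_neg, map_ofNat, map_intCast, Complex.conj_I, Complex.conj_ofReal,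
    Int.cast_sub]
  ring

section Rmat

variable (n : ℕ) (φ : Fin n → ℤ) (A1 A2 l0 m0 : ℝ) (b : ℝ × ℝ)

theorem Rmat_eq_vecMulVec_add_vecMulVec :
    let a := steeringVector φ (b.1 * l0 + b.2 * m0)
    Rmat n φ A1 A2 l0 m0 b = vecMulVec ((A1 : ℂ) • 1) 1 + vecMulVec ((A2 : ℂ) • star a) a := by
  intro a
  ext p q
  simp only [Rmat, a, of_apply, Matrix.add_apply, vecMulVec_apply, Pi.smul_apply, Pi.one_apply,
    Pi.star_apply, smul_eq_mul, mul_one, mul_assoc (A2 : ℂ),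
    star_steeringVector_mul_steeringVector]

theorem rank_Rmat_le_two : (Rmat n φ A1 A2 l0 m0 b).rank ≤ 2 := by
  let a := steeringVector φ (b.1 * l0 + b.2 * m0)
  simpa [Rmat_eq_vecMulVec_add_vecMulVec, Fin.sum_univ_two] using
    rank_sum_vecMulVec_le ![(A1 : ℂ) • 1, (A2 : ℂ) • star a] ![1, a]

theorem det_principal_3x3_Rmat_eq_zero_general {ι : Type*} [Fintype ι] [DecidableEq ι]
    (hι : 3 ≤ Fintype.card ι) (r c : ι → Fin n) :
    ((Rmat n φ A1 A2 l0 m0 b).submatrix r c).det = 0 :=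
  det_submatrix_eq_zero_of_rank_lt_card ((rank_Rmat_le_two n φ A1 A2 l0 m0 b).trans_lt hι) r c

end Rmat

/-- Lemma 2: every `3 × 3` principal submatrix of `R(b)` is singular. -/
theorem det_principal_3x3_Rmat_eq_zero (n : ℕ) (hn : 3 ≤ n) (φ : Fin n → ℤ)
    (hφ : StrictMono φ)
    (A1 A2 l0 m0 : ℝ) (hA1 : A1 = 1) (hA2 : 0 < A2) (hA2' : A2 < 1)
    (hs0 : (l0, m0) ≠ (0, 0)) (b : ℝ × ℝ)
    (i j k : Fin n) (hij : i < j) (hjk : j < k) :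
    ((Rmat n φ A1 A2 l0 m0 b).submatrix ![i, j, k] ![i, j, k]).det = 0 :=
  det_principal_3x3_Rmat_eq_zero_general n φ A1 A2 l0 m0 b (by simp) _ _
end

section
/- Let h(b) = (1/2)·√( (n² − 4·C(n,2))·(A1+A2)² + κ(b) ) with κ(b) = 4·Σ_{p<q} ( A1² + A2² + 2A1A2·cos(2π·φ_{pq}·(b·s0)) ) and C(n,2) = n(n−1)/2. If h(b) > 0, then the largest eigenvalue of R(b) equals n(A1+A2)/2 + h(b) and is simple (has multiplicity one). -/
/-- The largest (real) eigenvalue of a complex matrix. -/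
noncomputable def largestEig {n : ℕ} (A : Matrix (Fin n) (Fin n) ℂ) : ℝ :=
  sSup {x : ℝ | (x : ℂ) ∈ spectrum ℂ A}

/-- The eigenspace of a complex matrix for the eigenvalue `μ`. -/
noncomputable def eigSpace {n : ℕ} (A : Matrix (Fin n) (Fin n) ℂ) (μ : ℂ) :
    Submodule ℂ (Fin n → ℂ) :=
  Module.End.eigenspace (Matrix.toLin' A) μ

/-!
Writing `v_p = exp(iθ_p)` with `θ_p = 2π φ_p (b·s0)` and `S = [1 v]`, the visibility matrix factors
as `R = S D Sᴴ` with `D = diag(A1, A2)`. Hence `R` has the same nonzero eigenvalues, with the same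
algebraic multiplicities, as the 2×2 matrix `D Sᴴ S`. That matrix has trace `n(A1+A2)` and
discriminant `4h²`, so its eigenvalues are `n(A1+A2)/2 ± h`, and they are distinct as soon as
`h > 0`. The larger one is a simple root of the characteristic polynomial of `R`, and geometric
multiplicity is bounded by algebraic multiplicity.
-/

section NonzeroSpectrum

open Polynomial

variable {m n : Type*} [Fintype m] [DecidableEq m] [Fintype n] [DecidableEq n]

lemma rootMultiplicity_charpoly_mul_comm {R : Type*} [CommRing R] [IsDomain R]
    (A : Matrix m n R) (B : Matrix n m R) {μ : R} (hμ : μ ≠ 0) :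
    (A * B).charpoly.rootMultiplicity μ = (B * A).charpoly.rootMultiplicity μ := by
  have rootMultiplicity_X_pow_mul (k : ℕ) {p : R[X]} (hp : p.Monic) :
      (X ^ k * p).rootMultiplicity μ = p.rootMultiplicity μ := by
    have hX : ((X : R[X]) ^ k).rootMultiplicity μ = 0 :=
      rootMultiplicity_eq_zero (by simp [hμ])
    rw [rootMultiplicity_mul ((monic_X_pow k).mul hp).ne_zero, hX, zero_add]
  rw [← rootMultiplicity_X_pow_mul (Fintype.card n) (A * B).charpoly_monic,
    Matrix.charpoly_mul_comm', rootMultiplicity_X_pow_mul _ (B * A).charpoly_monic]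

variable {K : Type*} [Field K]

lemma mem_spectrum_iff_rootMultiplicity_charpoly_pos (A : Matrix n n K) (μ : K) :
    μ ∈ spectrum K A ↔ 0 < A.charpoly.rootMultiplicity μ := by
  rw [Matrix.mem_spectrum_iff_isRoot_charpoly, rootMultiplicity_pos A.charpoly_monic.ne_zero]

lemma mem_spectrum_mul_comm (A : Matrix m n K) (B : Matrix n m K) {μ : K} (hμ : μ ≠ 0) :
    μ ∈ spectrum K (A * B) ↔ μ ∈ spectrum K (B * A) := by
  simp only [mem_spectrum_iff_rootMultiplicity_charpoly_pos,
    rootMultiplicity_charpoly_mul_comm A B hμ]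

lemma finrank_eigenspace_eq_one_of_rootMultiplicity_charpoly_eq_one {A : Matrix n n K} {μ : K}
    (hμ : A.charpoly.rootMultiplicity μ = 1) :
    Module.finrank K (Module.End.eigenspace (Matrix.toLin' A) μ) = 1 := by
  have hspec : μ ∈ spectrum K A :=
    (mem_spectrum_iff_rootMultiplicity_charpoly_pos A μ).2 (hμ ▸ one_pos)
  rw [← Matrix.spectrum_toLin', ← Module.End.hasEigenvalue_iff_mem_spectrum] at hspec
  refine le_antisymm ?_ (Submodule.one_le_finrank_iff.2 hspec)
  calc Module.finrank K (Module.End.eigenspace (Matrix.toLin' A) μ)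
      ≤ (Matrix.toLin' A).charpoly.rootMultiplicity μ := LinearMap.finrank_eigenspace_le _ μ
    _ = 1 := by rw [Matrix.charpoly_toLin', hμ]

lemma isGreatest_real_spectrum_mul_comm (A : Matrix m n ℂ) (B : Matrix n m ℂ) {a : ℝ}
    (ha : 0 < a) (hBA : IsGreatest {x : ℝ | (x : ℂ) ∈ spectrum ℂ (B * A)} a) :
    IsGreatest {x : ℝ | (x : ℂ) ∈ spectrum ℂ (A * B)} a := by
  refine ⟨(mem_spectrum_mul_comm A B (Complex.ofReal_ne_zero.2 ha.ne')).2 hBA.1, fun x hx => ?_⟩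
  rcases eq_or_ne x 0 with rfl | hx0
  · exact ha.le
  · exact hBA.2 ((mem_spectrum_mul_comm A B (Complex.ofReal_ne_zero.2 hx0)).1 hx)

end NonzeroSpectrum

section TwoByTwo

open Polynomial

variable {R : Type*} [CommRing R] [IsDomain R] {M : Matrix (Fin 2) (Fin 2) R} {a b : R}

lemma det_fin_two_eq_mul_of_discr (h2 : (2 : R) ≠ 0) (htr : M.trace = a + b)
    (hdiscr : M.discr = (a - b) ^ 2) : M.det = a * b := by
  rw [Matrix.discr_fin_two, htr] at hdiscr
  refine mul_left_cancel₀ (mul_ne_zero h2 h2) ?_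
  linear_combination -hdiscr

lemma charpoly_fin_two_eq_mul (htr : M.trace = a + b) (hdet : M.det = a * b) :
    M.charpoly = (X - C a) * (X - C b) := by
  rw [Matrix.charpoly_fin_two, htr, hdet, C_add, C_mul]
  ring

lemma rootMultiplicity_charpoly_fin_two_eq_one (htr : M.trace = a + b) (hdet : M.det = a * b)
    (hab : a ≠ b) : M.charpoly.rootMultiplicity a = 1 := by
  classical
  have hne := M.charpoly_monic.ne_zero
  rw [charpoly_fin_two_eq_mul htr hdet] at hne ⊢
  rw [rootMultiplicity_mul hne, rootMultiplicity_X_sub_C_self, rootMultiplicity_X_sub_C,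
    if_neg hab]

lemma mem_spectrum_fin_two_iff {K : Type*} [Field K] {M : Matrix (Fin 2) (Fin 2) K} {a b : K}
    (htr : M.trace = a + b) (hdet : M.det = a * b) {x : K} :
    x ∈ spectrum K M ↔ x = a ∨ x = b := by
  rw [Matrix.mem_spectrum_iff_isRoot_charpoly, charpoly_fin_two_eq_mul htr hdet, root_mul,
    root_X_sub_C, root_X_sub_C, eq_comm, eq_comm (a := b)]

lemma isGreatest_real_spectrum_fin_two {M : Matrix (Fin 2) (Fin 2) ℂ} {a b : ℝ}
    (htr : M.trace = a + b) (hdet : M.det = a * b) (hba : b ≤ a) :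
    IsGreatest {x : ℝ | (x : ℂ) ∈ spectrum ℂ M} a := by
  have hspec (x : ℝ) : (x : ℂ) ∈ spectrum ℂ M ↔ x = a ∨ x = b := by
    rw [mem_spectrum_fin_two_iff htr hdet, Complex.ofReal_inj, Complex.ofReal_inj]
  refine ⟨(hspec a).2 (Or.inl rfl), fun x hx => ?_⟩
  rcases (hspec x).1 hx with rfl | rfl
  exacts [le_rfl, hba]

end TwoByTwo

section SteeringMatrix

open scoped Matrix

variable {ι : Type*} [Fintype ι]

lemma normSq_sum_exp_mul_I (θ : ι → ℝ) :
    Complex.normSq (∑ p, Complex.exp (θ p * Complex.I)) = ∑ p, ∑ q, Real.cos (θ q - θ p) := by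
  simp only [Complex.normSq_apply, Complex.re_sum, Complex.im_sum, Complex.exp_ofReal_mul_I_re,
    Complex.exp_ofReal_mul_I_im, Finset.sum_mul_sum, ← Finset.sum_add_distrib]
  refine Finset.sum_congr rfl fun p _ => Finset.sum_congr rfl fun q _ => ?_
  rw [Real.cos_sub]
  ring

lemma sum_sum_eq_two_nsmul_sum_lt_add_sum_diag [LinearOrder ι] {M : Type*} [AddCommMonoid M]
    {f : ι → ι → M} (hf : ∀ p q, f p q = f q p) :
    ∑ p, ∑ q, f p q = 2 • (∑ p, ∑ q, if p < q then f p q else 0) + ∑ p, f p p := by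
  have trichotomy (p q : ι) : f p q = (if p < q then f p q else 0) +
      (if q < p then f q p else 0) + (if p = q then f p p else 0) := by
    rcases lt_trichotomy p q with h | rfl | h
    · simp [h, h.not_gt, h.ne]
    · simp
    · simp [h, h.not_gt, h.ne', hf p q]
  have lower_eq_upper : (∑ p, ∑ q, if q < p then f q p else 0) =
      ∑ p, ∑ q, if p < q then f p q else 0 := Finset.sum_comm
  have diagonal (p : ι) : (∑ q, if p = q then f p p else 0) = f p p := by simp
  calc ∑ p, ∑ q, f p q
      = ∑ p, ∑ q, ((if p < q then f p q else 0) + (if q < p then f q p else 0) +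
          (if p = q then f p p else 0)) := by simp only [← trichotomy]
    _ = 2 • (∑ p, ∑ q, if p < q then f p q else 0) + ∑ p, f p p := by
      simp only [Finset.sum_add_distrib, lower_eq_upper, diagonal, two_nsmul]

/-- The steering matrix of the phases `θ`: its columns are the responses of the array to a source
at the phase centre and to a source seen with phases `θ`. -/
noncomputable def steeringMatrix (θ : ι → ℝ) : Matrix ι (Fin 2) ℂ :=
  Matrix.of fun p => ![1, Complex.exp (θ p * Complex.I)]

/-- The Gram matrix of the two columns of the steering matrix, with rows weighted by the fluxes
`a₁` and `a₂` of the sources. It carries the nonzero spectrum of the visibility matrix. -/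
noncomputable def weightedGram (a₁ a₂ : ℝ) (θ : ι → ℝ) : Matrix (Fin 2) (Fin 2) ℂ :=
  Matrix.diagonal ![(a₁ : ℂ), (a₂ : ℂ)] * (steeringMatrix θ)ᴴ * steeringMatrix θ

lemma weightedGram_eq (a₁ a₂ : ℝ) (θ : ι → ℝ) :
    weightedGram a₁ a₂ θ =
      !![(a₁ : ℂ) * Fintype.card ι, a₁ * ∑ p, Complex.exp (θ p * Complex.I);
        a₂ * star (∑ p, Complex.exp (θ p * Complex.I)), a₂ * Fintype.card ι] := by
  have unimodular (p : ι) : (starRingEnd ℂ) (Complex.exp (θ p * Complex.I)) *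
      Complex.exp (θ p * Complex.I) = 1 := by
    simp [← Complex.exp_conj, ← Complex.exp_add]
  rw [weightedGram, Matrix.mul_assoc]
  ext i j
  fin_cases i <;> fin_cases j <;> simp [Matrix.mul_apply, steeringMatrix, unimodular]

lemma trace_weightedGram (a₁ a₂ : ℝ) (θ : ι → ℝ) :
    (weightedGram a₁ a₂ θ).trace = ((Fintype.card ι * (a₁ + a₂) : ℝ) : ℂ) := by
  rw [weightedGram_eq, Matrix.trace_fin_two_of]
  push_cast
  ring

lemma det_weightedGram (a₁ a₂ : ℝ) (θ : ι → ℝ) :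
    (weightedGram a₁ a₂ θ).det =
      ((a₁ * a₂ * ((Fintype.card ι : ℝ) ^ 2 - ∑ p, ∑ q, Real.cos (θ q - θ p)) : ℝ) : ℂ) := by
  have hnormSq := Complex.mul_conj (∑ p, Complex.exp (θ p * Complex.I))
  rw [normSq_sum_exp_mul_I] at hnormSq
  rw [weightedGram_eq, Matrix.det_fin_two_of, Complex.ofReal_mul, Complex.ofReal_sub, ← hnormSq,
    starRingEnd_apply]
  push_cast
  ring

lemma radicand_eq_trace_sq_sub_four_mul_det [LinearOrder ι] (a₁ a₂ : ℝ) (θ : ι → ℝ) :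
    ((Fintype.card ι : ℝ) ^ 2 - 4 * ((Fintype.card ι).choose 2 : ℝ)) * (a₁ + a₂) ^ 2 +
      4 * (∑ p, ∑ q, if p < q then
        a₁ ^ 2 + a₂ ^ 2 + 2 * a₁ * a₂ * Real.cos (θ q - θ p) else 0) =
    (Fintype.card ι * (a₁ + a₂)) ^ 2 -
      4 * (a₁ * a₂ * ((Fintype.card ι : ℝ) ^ 2 - ∑ p, ∑ q, Real.cos (θ q - θ p))) := by
  have hsplit := sum_sum_eq_two_nsmul_sum_lt_add_sum_diag
    (f := fun p q => a₁ ^ 2 + a₂ ^ 2 + 2 * a₁ * a₂ * Real.cos (θ q - θ p))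
    fun p q => by rw [← Real.cos_neg, neg_sub]
  simp only [Finset.sum_add_distrib, ← Finset.mul_sum, sub_self, Real.cos_zero, Finset.sum_const,
    Finset.card_univ, nsmul_eq_mul, Nat.cast_ofNat] at hsplit
  rw [Nat.cast_choose_two]
  linear_combination -2 * hsplit

lemma discr_weightedGram [LinearOrder ι] (a₁ a₂ : ℝ) (θ : ι → ℝ) :
    (weightedGram a₁ a₂ θ).discr =
      ((((Fintype.card ι : ℝ) ^ 2 - 4 * ((Fintype.card ι).choose 2 : ℝ)) * (a₁ + a₂) ^ 2 +
        4 * ∑ p, ∑ q, if p < q then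
          a₁ ^ 2 + a₂ ^ 2 + 2 * a₁ * a₂ * Real.cos (θ q - θ p) else 0 : ℝ) : ℂ) := by
  rw [Matrix.discr_fin_two, trace_weightedGram, det_weightedGram,
    radicand_eq_trace_sq_sub_four_mul_det]
  simp only [Complex.ofReal_sub, Complex.ofReal_pow, Complex.ofReal_mul, Complex.ofReal_ofNat]

end SteeringMatrix

/-- The phase `2π φ_p (b·s0)` of the off-centre source at the antenna `p`. -/
noncomputable def sourcePhase {ι : Type*} (φ : ι → ℤ) (l0 m0 : ℝ) (b : ℝ × ℝ) (p : ι) : ℝ :=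
  2 * Real.pi * φ p * (b.1 * l0 + b.2 * m0)

lemma sourcePhase_sub {ι : Type*} (φ : ι → ℤ) (l0 m0 : ℝ) (b : ℝ × ℝ) (p q : ι) :
    sourcePhase φ l0 m0 b q - sourcePhase φ l0 m0 b p =
      2 * Real.pi * ((φ q - φ p : ℤ) : ℝ) * (b.1 * l0 + b.2 * m0) := by
  simp only [sourcePhase, Int.cast_sub]
  ring

open scoped Matrix in
lemma Rmat_eq_steeringMatrix_mul (n : ℕ) (φ : Fin n → ℤ) (A1 A2 l0 m0 : ℝ) (b : ℝ × ℝ) :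
    Rmat n φ A1 A2 l0 m0 b = steeringMatrix (sourcePhase φ l0 m0 b) *
      (Matrix.diagonal ![(A1 : ℂ), (A2 : ℂ)] * (steeringMatrix (sourcePhase φ l0 m0 b))ᴴ) := by
  ext p q
  have exp_phase : Complex.exp (-2 * (Real.pi : ℂ) * Complex.I * ((φ q - φ p : ℤ) : ℂ) *
        ((b.1 * l0 + b.2 * m0 : ℝ) : ℂ)) =
      Complex.exp (sourcePhase φ l0 m0 b p * Complex.I) *
        (starRingEnd ℂ) (Complex.exp (sourcePhase φ l0 m0 b q * Complex.I)) := by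
    rw [← Complex.exp_conj, ← Complex.exp_add, map_mul, Complex.conj_ofReal, Complex.conj_I]
    congr 1
    simp only [sourcePhase]
    push_cast
    ring
  rw [Rmat, Matrix.of_apply, exp_phase]
  simp [steeringMatrix, Matrix.mul_apply, Fin.sum_univ_two, mul_left_comm]

theorem largestEig_eq_and_simple_general (n : ℕ) (φ : Fin n → ℤ) (A1 A2 l0 m0 : ℝ) (b : ℝ × ℝ)
    (κ : ℝ)
    (hκ : κ = 4 * ∑ p : Fin n, ∑ q : Fin n, if p < q then
        A1 ^ 2 + A2 ^ 2 +
          2 * A1 * A2 * Real.cos (2 * Real.pi * ((φ q - φ p : ℤ) : ℝ) * (b.1 * l0 + b.2 * m0))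
      else 0)
    (h : ℝ)
    (hh : h = (1 / 2) * Real.sqrt (((n : ℝ) ^ 2 - 4 * (n.choose 2 : ℝ)) * (A1 + A2) ^ 2 + κ))
    (hpos : 0 < h)
    (heig : 0 < (n : ℝ) * (A1 + A2) / 2 + h) :
    (((n : ℝ) * (A1 + A2) / 2 + h : ℝ) : ℂ) ∈ spectrum ℂ (Rmat n φ A1 A2 l0 m0 b) ∧
    largestEig (Rmat n φ A1 A2 l0 m0 b) = (n : ℝ) * (A1 + A2) / 2 + h ∧
    Module.finrank ℂ
      (eigSpace (Rmat n φ A1 A2 l0 m0 b) (((n : ℝ) * (A1 + A2) / 2 + h : ℝ) : ℂ)) = 1 := by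
  set M := weightedGram A1 A2 (sourcePhase φ l0 m0 b) with hM
  set s := (n : ℝ) * (A1 + A2) / 2 with hs
  have htr : M.trace = ((s + h : ℝ) : ℂ) + ((s - h : ℝ) : ℂ) := by
    rw [hM, trace_weightedGram, Fintype.card_fin, ← Complex.ofReal_add, hs]
    ring_nf
  have hdiscr : M.discr = (((s + h : ℝ) : ℂ) - ((s - h : ℝ) : ℂ)) ^ 2 := by
    have hrad := Real.sqrt_pos.1 (pos_of_mul_pos_right (hh ▸ hpos) (by norm_num))
    rw [hM, discr_weightedGram, Fintype.card_fin]
    simp only [sourcePhase_sub, ← hκ]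
    rw [← Real.sq_sqrt hrad.le, hh]
    push_cast
    ring
  have hdet := det_fin_two_eq_mul_of_discr two_ne_zero htr hdiscr
  have hne : ((s + h : ℝ) : ℂ) ≠ ((s - h : ℝ) : ℂ) :=
    Complex.ofReal_injective.ne (by linarith)
  rw [Rmat_eq_steeringMatrix_mul]
  have hgreatest := isGreatest_real_spectrum_mul_comm (steeringMatrix _) _ heig
    (isGreatest_real_spectrum_fin_two (M := M) htr hdet (by linarith))
  refine ⟨hgreatest.1, hgreatest.csSup_eq,
    finrank_eigenspace_eq_one_of_rootMultiplicity_charpoly_eq_one ?_⟩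
  rw [rootMultiplicity_charpoly_mul_comm _ _ (Complex.ofReal_ne_zero.2 heig.ne')]
  exact rootMultiplicity_charpoly_fin_two_eq_one htr hdet hne

/-- If `h(b) > 0`, where `h(b) = (1/2)·√((n² − 4·C(n,2))·(A1+A2)² + κ(b))` and
`κ(b) = 4·Σ_{p<q} (A1² + A2² + 2A1A2·cos(2π·φ_{pq}·(b·s0)))`, then the largest
eigenvalue of `R(b)` equals `n(A1+A2)/2 + h(b)`, it is indeed an eigenvalue, and it is
simple (its eigenspace has dimension one). -/
theorem largestEig_eq_and_simple (n : ℕ) (hn : 2 ≤ n) (φ : Fin n → ℤ) (hφ : StrictMono φ)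
    (A1 A2 l0 m0 : ℝ) (hA1 : A1 = 1) (hA2 : 0 < A2) (hA2' : A2 < 1)
    (hs0 : (l0, m0) ≠ (0, 0)) (b : ℝ × ℝ)
    (κ : ℝ)
    (hκ : κ = 4 * ∑ p : Fin n, ∑ q : Fin n, if p < q then
        A1 ^ 2 + A2 ^ 2 +
          2 * A1 * A2 * Real.cos (2 * Real.pi * ((φ q - φ p : ℤ) : ℝ) * (b.1 * l0 + b.2 * m0))
      else 0)
    (h : ℝ)
    (hh : h = (1 / 2) * Real.sqrt (((n : ℝ) ^ 2 - 4 * (n.choose 2 : ℝ)) * (A1 + A2) ^ 2 + κ))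
    (hpos : 0 < h) :
    (((n : ℝ) * (A1 + A2) / 2 + h : ℝ) : ℂ) ∈ spectrum ℂ (Rmat n φ A1 A2 l0 m0 b) ∧
    largestEig (Rmat n φ A1 A2 l0 m0 b) = (n : ℝ) * (A1 + A2) / 2 + h ∧
    Module.finrank ℂ
      (eigSpace (Rmat n φ A1 A2 l0 m0 b) (((n : ℝ) * (A1 + A2) / 2 + h : ℝ) : ℂ)) = 1 :=
  largestEig_eq_and_simple_general n φ A1 A2 l0 m0 b κ hκ h hh hpos (by subst hA1; positivity)
end

section
/- The off-diagonal two-dimensional Fourier coefficients of a periodic, effectively one-dimensional function vanish: under the stated hypotheses on f, the coefficients c_{jk} = |l0||m0| · ∫_{−1/(2|m0|)}^{1/(2|m0|)} ∫_{−1/(2|l0|)}^{1/(2|l0|)} f(u, v) · exp(−2πi(j·u·l0 + k·v·m0)) du dv satisfy c_{jk} = 0 whenever j ≠ k. (Key step of Proposition 3.) -/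
open MeasureTheory

/-!
Being constant along the lines `v = -(l0 / m0) u + c` means that `f` is invariant under the
translations by `(t / l0, -t / m0)`. Such a translation multiplies the exponential with frequencies
`(j, k)` by `exp (-2πi (j - k) t)`, while an integral over a period cell does not see translations
at all. For `t = 1 / (2 (j - k))` the factor is `-1`, so the coefficient equals its own negative.
-/

section PeriodCell

variable {E : Type*} [NormedAddCommGroup E] [NormedSpace ℝ E]

theorem intervalIntegral_comp_add_right_of_periodic {g : ℝ → E} {a b : ℝ}
    (hg : Function.Periodic g (b - a)) (s : ℝ) :
    ∫ x in a..b, g (x + s) = ∫ x in a..b, g x := by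
  calc ∫ x in a..b, g (x + s) = ∫ x in (a + s)..(a + s + (b - a)), g x := by
        rw [intervalIntegral.integral_comp_add_right, show a + s + (b - a) = b + s by ring]
    _ = ∫ x in a..(a + (b - a)), g x := hg.intervalIntegral_add_eq _ _
    _ = ∫ x in a..b, g x := by rw [add_sub_cancel]

theorem iteratedIntegral_comp_add_of_periodic {G : ℝ × ℝ → E} {a b c d : ℝ}
    (hu : ∀ v, Function.Periodic (fun u ↦ G (u, v)) (b - a))
    (hv : ∀ u, Function.Periodic (fun v ↦ G (u, v)) (d - c)) (s t : ℝ) :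
    ∫ v in c..d, ∫ u in a..b, G (u + s, v + t) = ∫ v in c..d, ∫ u in a..b, G (u, v) := by
  have inner_periodic : Function.Periodic (fun v ↦ ∫ u in a..b, G (u, v)) (d - c) := fun v ↦
    intervalIntegral.integral_congr fun u _ ↦ hv u v
  calc ∫ v in c..d, ∫ u in a..b, G (u + s, v + t)
      = ∫ v in c..d, ∫ u in a..b, G (u, v + t) :=
        intervalIntegral.integral_congr fun v _ ↦
          intervalIntegral_comp_add_right_of_periodic (hu (v + t)) s
    _ = ∫ v in c..d, ∫ u in a..b, G (u, v) :=
        intervalIntegral_comp_add_right_of_periodic inner_periodic t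

theorem iteratedIntegral_eq_zero_of_translate_eq_neg {G : ℝ × ℝ → E} {a b c d : ℝ}
    (hu : ∀ v, Function.Periodic (fun u ↦ G (u, v)) (b - a))
    (hv : ∀ u, Function.Periodic (fun v ↦ G (u, v)) (d - c)) (w : ℝ × ℝ)
    (hG : ∀ z, G (z + w) = -G z) :
    ∫ v in c..d, ∫ u in a..b, G (u, v) = 0 := by
  have eq_neg_self : ∫ v in c..d, ∫ u in a..b, G (u, v) =
      -∫ v in c..d, ∫ u in a..b, G (u, v) := by
    calc ∫ v in c..d, ∫ u in a..b, G (u, v)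
        = ∫ v in c..d, ∫ u in a..b, G ((u, v) + w) :=
          (iteratedIntegral_comp_add_of_periodic hu hv w.1 w.2).symm
      _ = -∫ v in c..d, ∫ u in a..b, G (u, v) := by
          simp only [hG, intervalIntegral.integral_neg]
  have := IsAddTorsionFree.of_isTorsionFree ℝ E
  exact self_eq_neg.mp eq_neg_self

theorem exists_int_div_eq_cell_length (l : ℝ) :
    ∃ n : ℤ, 1 / (2 * |l|) - -(1 / (2 * |l|)) = n / l := by
  have length_eq : 1 / (2 * |l|) - -(1 / (2 * |l|)) = 1 / |l| := by ring
  rcases abs_choice l with h | h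
  · exact ⟨1, by rw [length_eq, h, Int.cast_one]⟩
  · exact ⟨-1, by rw [length_eq, h, Int.cast_neg, Int.cast_one, neg_div, div_neg]⟩

end PeriodCell

theorem translate_eq_of_constant_on_lines {α : Type*} {l m : ℝ} (hl : l ≠ 0) {f : ℝ × ℝ → α}
    (hline : ∀ u c : ℝ, f (u, -(l / m) * u + c) = f (0, c)) (t : ℝ) (z : ℝ × ℝ) :
    f (z + (t / l, -(t / m))) = f z := by
  have eq_on_axis (u v : ℝ) : f (u, v) = f (0, v + l / m * u) := by
    rw [← hline u]
    congr 2
    ring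
  obtain ⟨u, v⟩ := z
  rw [Prod.mk_add_mk, eq_on_axis, eq_on_axis u]
  congr 2
  field_simp
  ring

section FourierCoefficients

/-- The exponential `exp (-2πi (j u l + k v m))` with frequencies `j`, `k` against which a function
on `ℝ²` with periods `1 / l` and `1 / m` is integrated to obtain its Fourier coefficients. -/
noncomputable def planeWave (l m : ℝ) (j k : ℤ) (z : ℝ × ℝ) : ℂ :=
  Complex.exp (-2 * (Real.pi : ℂ) * Complex.I *
    ((j : ℂ) * (z.1 : ℂ) * (l : ℂ) + (k : ℂ) * (z.2 : ℂ) * (m : ℂ)))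

variable {l m : ℝ} {j k : ℤ}

theorem continuous_planeWave : Continuous (planeWave l m j k) := by
  unfold planeWave
  fun_prop

theorem planeWave_add (z w : ℝ × ℝ) :
    planeWave l m j k (z + w) = planeWave l m j k z * planeWave l m j k w := by
  simp only [planeWave, ← Complex.exp_add, Prod.fst_add, Prod.snd_add]
  congr 1
  push_cast
  ring

theorem planeWave_lattice (hl : l ≠ 0) (hm : m ≠ 0) (p q : ℤ) :
    planeWave l m j k (p / l, q / m) = 1 := by
  have hl' : (l : ℂ) ≠ 0 := mod_cast hl
  have hm' : (m : ℂ) ≠ 0 := mod_cast hm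
  refine Complex.exp_eq_one_iff.mpr ⟨-(j * p + k * q), ?_⟩
  push_cast
  field_simp

theorem planeWave_antidiagonal_half (hl : l ≠ 0) (hm : m ≠ 0) (hjk : j ≠ k) :
    planeWave l m j k (1 / (2 * (j - k)) / l, -(1 / (2 * (j - k)) / m)) = -1 := by
  have hl' : (l : ℂ) ≠ 0 := mod_cast hl
  have hm' : (m : ℂ) ≠ 0 := mod_cast hm
  have hjk' : (j : ℂ) - k ≠ 0 := sub_ne_zero.mpr (mod_cast hjk)
  rw [← Complex.exp_neg_pi_mul_I, planeWave]
  congr 1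
  push_cast
  field_simp
  ring

variable {E : Type*} [NormedAddCommGroup E] [NormedSpace ℂ E] {f : ℝ × ℝ → E}

/-- The Fourier coefficient `c_{jk}` of a function on `ℝ²` with periods `1 / l` and `1 / m`: its
mean against `planeWave l m j k` over the period cell centred at the origin. The absolute values
allow `l` and `m` to be negative. -/
noncomputable def doubleFourierCoeff (l m : ℝ) (f : ℝ × ℝ → E) (j k : ℤ) : E :=
  ((|l| * |m| : ℝ) : ℂ) •
    ∫ v in (-(1 / (2 * |m|)))..(1 / (2 * |m|)), ∫ u in (-(1 / (2 * |l|)))..(1 / (2 * |l|)),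
      planeWave l m j k (u, v) • f (u, v)

theorem planeWave_smul_lattice_translate (hl : l ≠ 0) (hm : m ≠ 0)
    (hper : ∀ (u v : ℝ) (p q : ℤ), f (u + p / l, v + q / m) = f (u, v)) (u v : ℝ) (p q : ℤ) :
    planeWave l m j k (u + p / l, v + q / m) • f (u + p / l, v + q / m) =
      planeWave l m j k (u, v) • f (u, v) := by
  rw [hper, ← Prod.mk_add_mk, planeWave_add, planeWave_lattice hl hm, mul_one]

theorem doubleFourierCoeff_eq_zero_of_translate_eq_neg (hl : l ≠ 0) (hm : m ≠ 0)
    (hper : ∀ (u v : ℝ) (p q : ℤ), f (u + p / l, v + q / m) = f (u, v)) (w : ℝ × ℝ)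
    (hw : ∀ z, planeWave l m j k (z + w) • f (z + w) = -(planeWave l m j k z • f z)) :
    doubleFourierCoeff l m f j k = 0 := by
  obtain ⟨p, hp⟩ := exists_int_div_eq_cell_length l
  obtain ⟨q, hq⟩ := exists_int_div_eq_cell_length m
  have translate := planeWave_smul_lattice_translate (j := j) (k := k) hl hm hper
  rw [doubleFourierCoeff, iteratedIntegral_eq_zero_of_translate_eq_neg
    (G := fun z ↦ planeWave l m j k z • f z) ?_ ?_ w hw, smul_zero]
  · intro v u
    simpa only [hp, Int.cast_zero, zero_div, add_zero] using translate u v p 0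
  · intro u v
    simpa only [hq, Int.cast_zero, zero_div, add_zero] using translate u v 0 q

-- A divergent integral, and any integral in an incomplete space, has the junk value `0`: this is
-- what the conjunct on local integrability and the completeness of `E` exclude.
theorem offdiag_fourier_coeff_vanish_general [CompleteSpace E] (hl : l ≠ 0) (hm : m ≠ 0)
    (hf : LocallyIntegrable f)
    (hper : ∀ (u v : ℝ) (p q : ℤ), f (u + p / l, v + q / m) = f (u, v))
    (hline : ∀ u c : ℝ, f (u, -(l / m) * u + c) = f (0, c)) (hjk : j ≠ k) :
    LocallyIntegrable (fun z ↦ planeWave l m j k z • f z) ∧ doubleFourierCoeff l m f j k = 0 := by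
  refine ⟨hf.continuous_smul continuous_planeWave,
    doubleFourierCoeff_eq_zero_of_translate_eq_neg hl hm hper
      (1 / (2 * (j - k)) / l, -(1 / (2 * (j - k)) / m)) fun z ↦ ?_⟩
  rw [translate_eq_of_constant_on_lines hl hline, planeWave_add,
    planeWave_antidiagonal_half hl hm hjk, mul_neg_one, neg_smul]

end FourierCoefficients

/-- Key step of Proposition 3: for a continuously differentiable function `f : ℝ² → ℂ`
that is doubly periodic with periods `1/l0` and `1/m0`, effectively one-dimensional
(constant along the lines `v = −(l0/m0)u + c`), and Hermitian
(`f(−u,−v) = conj (f(u,v))`), the off-diagonal two-dimensional Fourier coefficients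
`c_{jk} = |l0||m0| ∫∫ f(u,v)·exp(−2πi(j·u·l0 + k·v·m0)) du dv` vanish for `j ≠ k`. -/
theorem offdiag_fourier_coeff_vanish (l0 m0 : ℝ) (hl0 : l0 ≠ 0) (hm0 : m0 ≠ 0)
    (f : ℝ × ℝ → ℂ) (hf : ContDiff ℝ 1 f)
    (hper : ∀ (u v : ℝ) (j k : ℤ), f (u + j / l0, v + k / m0) = f (u, v))
    (hline : ∀ u c : ℝ, f (u, -(l0 / m0) * u + c) = f (0, c))
    (hherm : ∀ u v : ℝ, f (-u, -v) = starRingEnd ℂ (f (u, v)))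
    (j k : ℤ) (hjk : j ≠ k) :
    ((|l0| * |m0| : ℝ) : ℂ) *
      ∫ v in (-(1 / (2 * |m0|)))..(1 / (2 * |m0|)),
        ∫ u in (-(1 / (2 * |l0|)))..(1 / (2 * |l0|)),
          f (u, v) *
            Complex.exp (-2 * (Real.pi : ℂ) * Complex.I *
              ((j : ℂ) * (u : ℂ) * (l0 : ℂ) + (k : ℂ) * (v : ℂ) * (m0 : ℂ))) = 0 := by
  simpa only [doubleFourierCoeff, planeWave, smul_eq_mul, mul_comm (Complex.exp _)] using
    (offdiag_fourier_coeff_vanish_general hl0 hm0 hf.continuous.locallyIntegrable hper hline hjk).2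
end

section
/- A periodic, effectively one-dimensional, Hermitian, continuously differentiable function admits a one-dimensional Fourier-series representation: under the stated hypotheses on f, there exist real numbers c_j (j ∈ ℤ), given by c_j = |l0||m0| · ∫_{−1/(2|m0|)}^{1/(2|m0|)} ∫_{−1/(2|l0|)}^{1/(2|l0|)} f(u, v) · exp(−2πi·j·(u·l0 + v·m0)) du dv, such that f(u, v) = Σ_{j=−∞}^{∞} c_j · exp(2πi·j·(u·l0 + v·m0)) for all real u, v, with the series converging. (Proposition 3.) -/
open MeasureTheory

/-!
In the phase variable `t = u * l0 + v * m0`, the function `f` is a function `g` of `t` alone, of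
period `1`. Integrating by parts, the Fourier coefficients of `g` are those of `g'` divided by
`2πin`; the latter are square-summable by Parseval, so the former are summable by AM-GM against
`∑ 1 / n ^ 2`, and the Fourier series of `g` converges pointwise to `g`. For fixed `v`, as `u` runs
over an interval of length `1 / |l0|`, the phase runs over exactly one period, so the double
integrals are the Fourier coefficients of `g`. They are real because `(u, v) ↦ (-u, -v)` preserves
the domain of integration and conjugates the integrand.
-/

section FourierSeries

variable {T : ℝ} {g g' : ℝ → ℂ}

lemma norm_fourierCoeffOn_of_hasDeriv_right {a b : ℝ} (hab : a < b) {n : ℤ} (hn : n ≠ 0)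
    (hg : ContinuousOn g (Set.Icc a b))
    (hgg' : ∀ x ∈ Set.Ioo a b, HasDerivWithinAt g (g' x) (Set.Ioi x) x)
    (hg' : IntervalIntegrable g' volume a b) (hend : g a = g b) :
    ‖fourierCoeffOn hab g n‖ =
      (b - a) / (2 * Real.pi) * (|(n : ℝ)|⁻¹ * ‖fourierCoeffOn hab g' n‖) := by
  rw [fourierCoeffOn_of_hasDeriv_right hab hn (by rwa [Set.uIcc_of_le hab.le])
    (by rwa [min_eq_left hab.le, max_eq_right hab.le]) hg', hend, ← Complex.ofReal_sub]
  simp only [neg_mul, one_div, sub_self, mul_zero, zero_sub, norm_mul, norm_neg, norm_inv,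
    Complex.norm_intCast, Complex.norm_I, Complex.norm_real, Real.norm_eq_abs, Complex.norm_ofNat,
    abs_of_pos Real.pi_pos, abs_of_pos (sub_pos.mpr hab)]
  ring

lemma summable_fourierCoeffOn_of_hasDeriv_right {a b : ℝ} (hab : a < b)
    (hg : ContinuousOn g (Set.Icc a b))
    (hgg' : ∀ x ∈ Set.Ioo a b, HasDerivWithinAt g (g' x) (Set.Ioi x) x)
    (hg' : MemLp g' 2 (volume.restrict (Set.Ioc a b))) (hend : g a = g b) :
    Summable (fourierCoeffOn hab g) := by
  have hint : IntervalIntegrable g' volume a b :=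
    (intervalIntegrable_iff_integrableOn_Ioc_of_le hab.le).mpr (hg'.integrable one_le_two)
  have hinv : Summable fun n : ℤ => |(n : ℝ)|⁻¹ ^ 2 := by
    simpa only [inv_pow, sq_abs, one_div] using Real.summable_one_div_int_pow.mpr one_lt_two
  have hprod : Summable fun n : ℤ => |(n : ℝ)|⁻¹ * ‖fourierCoeffOn hab g' n‖ := by
    refine .of_nonneg_of_le (fun n => by positivity) (fun n => ?_)
      (hinv.add (hasSum_sq_fourierCoeffOn hab hg').summable)
    have hsq := two_mul_le_add_sq |(n : ℝ)|⁻¹ ‖fourierCoeffOn hab g' n‖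
    have hnonneg : 0 ≤ |(n : ℝ)|⁻¹ * ‖fourierCoeffOn hab g' n‖ := by positivity
    linarith
  refine .of_norm_bounded_eventually (hprod.mul_left ((b - a) / (2 * Real.pi))) ?_
  filter_upwards [(Set.finite_singleton (0 : ℤ)).compl_mem_cofinite] with n hn
  exact (norm_fourierCoeffOn_of_hasDeriv_right hab hn hg hgg' hint hend).le

lemma fourierCoeff_lift [hT : Fact (0 < T)] (hper : Function.Periodic g T) (a : ℝ) (n : ℤ) :
    fourierCoeff hper.lift n = fourierCoeffOn (lt_add_of_pos_right a hT.out) g n := by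
  rw [fourierCoeffOn_eq_integral, fourierCoeff_eq_intervalIntegral _ _ a, add_sub_cancel_left]
  rfl

lemma hasSum_fourierCoeff_lift_of_hasDeriv_right [Fact (0 < T)] (hper : Function.Periodic g T)
    (hg : Continuous g) {a : ℝ}
    (hgg' : ∀ x ∈ Set.Ioo a (a + T), HasDerivWithinAt g (g' x) (Set.Ioi x) x)
    (hg' : MemLp g' 2 (volume.restrict (Set.Ioc a (a + T)))) (x : ℝ) :
    HasSum (fun n => fourierCoeff hper.lift n * fourier n (x : AddCircle T)) (g x) := by
  let G : C(AddCircle T, ℂ) := ⟨hper.lift, continuous_coinduced_dom.mpr hg⟩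
  refine has_pointwise_sum_fourier_series_of_summable (f := G) ?_ x
  have hcoeff : fourierCoeff G = fourierCoeffOn _ g := funext (fourierCoeff_lift hper a)
  rw [hcoeff]
  exact summable_fourierCoeffOn_of_hasDeriv_right _ hg.continuousOn hgg' hg' (hper a).symm

end FourierSeries

lemma memLp_two_restrict_Ioc_of_continuous {E : Type*} [NormedAddCommGroup E] {h : ℝ → E}
    (hh : Continuous h) (a b : ℝ) : MemLp h 2 (volume.restrict (Set.Ioc a b)) :=
  (memLp_two_iff_integrable_sq_norm hh.aestronglyMeasurable).mpr
    (hh.norm.pow 2).integrableOn_Ioc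

section ChangeOfVariables

variable {E : Type*} [NormedAddCommGroup E] [NormedSpace ℝ E]

lemma intervalIntegral_comp_neg_symm (F : ℝ → E) (a : ℝ) :
    ∫ x in (-a)..a, F (-x) = ∫ x in (-a)..a, F x := by
  rw [intervalIntegral.integral_comp_neg, neg_neg]

lemma intervalIntegral_intervalIntegral_comp_neg_symm (F : ℝ → ℝ → E) (a b : ℝ) :
    ∫ v in (-b)..b, ∫ u in (-a)..a, F (-u) (-v) = ∫ v in (-b)..b, ∫ u in (-a)..a, F u v := by
  simp_rw [fun v => intervalIntegral_comp_neg_symm (fun u => F u v) a]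
  exact intervalIntegral_comp_neg_symm (fun v => ∫ u in (-a)..a, F u v) b

lemma conj_intervalIntegral_intervalIntegral_of_hermitian {F : ℝ → ℝ → ℂ}
    (hF : ∀ u v, F (-u) (-v) = starRingEnd ℂ (F u v)) (a b : ℝ) :
    starRingEnd ℂ (∫ v in (-b)..b, ∫ u in (-a)..a, F u v) =
      ∫ v in (-b)..b, ∫ u in (-a)..a, F u v := by
  simpa only [hF, intervalIntegral.intervalIntegral_conj] using
    intervalIntegral_intervalIntegral_comp_neg_symm F a b

lemma intervalIntegral_addCircle_comp_mul_add {T : ℝ} [Fact (0 < T)] (F : AddCircle T → E) {l : ℝ}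
    (hl : l ≠ 0) (d : ℝ) :
    ∫ u in (-(T / (2 * |l|)))..(T / (2 * |l|)), F ↑(l * u + d) = |l|⁻¹ • ∫ x, F x := by
  have of_pos {k : ℝ} (hk : 0 < k) :
      ∫ u in (-(T / (2 * k)))..(T / (2 * k)), F ↑(k * u + d) = k⁻¹ • ∫ x, F x := by
    have hend : k * (T / (2 * k)) + d = k * -(T / (2 * k)) + d + T := by field_simp; ring
    rw [intervalIntegral.integral_comp_mul_add (fun t : ℝ => F t) hk.ne', hend,
      AddCircle.intervalIntegral_preimage]
  rw [← of_pos (abs_pos.mpr hl)]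
  rcases abs_choice l with habs | habs
  · rw [habs]
  · rw [← intervalIntegral_comp_neg_symm]
    simp_rw [habs, mul_neg, neg_mul]

end ChangeOfVariables

section Phase

variable {l m : ℝ} {f : ℝ × ℝ → ℂ}

/-- The profile of a function `f` of the phase `t = u * l + v * m` alone, read off on the axis
`u = 0`. -/
noncomputable def phaseProfile (m : ℝ) (f : ℝ × ℝ → ℂ) (t : ℝ) : ℂ := f (0, t / m)

/-- The `j`-th Fourier coefficient of `f` with respect to the phase `u * l + v * m`, as an average
over the centred cell with sides `1 / |l|` and `1 / |m|`. -/
noncomputable def phaseFourierCoeff (l m : ℝ) (f : ℝ × ℝ → ℂ) (j : ℤ) : ℂ :=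
  ((|l| * |m| : ℝ) : ℂ) *
    ∫ v in (-(1 / (2 * |m|)))..(1 / (2 * |m|)),
      ∫ u in (-(1 / (2 * |l|)))..(1 / (2 * |l|)),
        f (u, v) *
          Complex.exp (-2 * (Real.pi : ℂ) * Complex.I * (j : ℂ) *
            ((u : ℂ) * (l : ℂ) + (v : ℂ) * (m : ℂ)))

lemma phaseProfile_apply_phase (hm : m ≠ 0)
    (hline : ∀ u c : ℝ, f (u, -(l / m) * u + c) = f (0, c)) (u v : ℝ) :
    phaseProfile m f (u * l + v * m) = f (u, v) := by
  rw [phaseProfile, ← hline u]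
  congr 2
  field_simp
  ring

lemma periodic_phaseProfile (hper : ∀ v : ℝ, f (0, v + 1 / m) = f (0, v)) :
    Function.Periodic (phaseProfile m f) 1 := fun t => by
  rw [phaseProfile, add_div, hper, phaseProfile]

lemma phaseFourierCoeff_eq_fourierCoeff (hl : l ≠ 0) (hm : m ≠ 0) {F : UnitAddCircle → ℂ}
    (hF : ∀ u v : ℝ, F ↑(u * l + v * m) = f (u, v)) (j : ℤ) :
    phaseFourierCoeff l m f j = fourierCoeff F j := by
  have inner (v : ℝ) :
      ∫ u in (-(1 / (2 * |l|)))..(1 / (2 * |l|)),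
        f (u, v) * Complex.exp (-2 * (Real.pi : ℂ) * Complex.I * (j : ℂ) *
          ((u : ℂ) * (l : ℂ) + (v : ℂ) * (m : ℂ))) =
      |l|⁻¹ • ∫ x, fourier (-j) x • F x := by
    rw [← intervalIntegral_addCircle_comp_mul_add (fun x => fourier (-j) x • F x) hl (v * m)]
    refine intervalIntegral.integral_congr fun u _ => ?_
    simp only [mul_comm l u, hF, fourier_coe_apply, smul_eq_mul, mul_comm (f (u, v))]
    push_cast
    ring_nf
  have width : 1 / (2 * |m|) - -(1 / (2 * |m|)) = |m|⁻¹ := by ring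
  rw [phaseFourierCoeff, fourierCoeff, AddCircle.integral_haarAddCircle]
  simp_rw [inner, intervalIntegral.integral_const, width, ← Complex.real_smul, smul_smul]
  congr 1
  field_simp

lemma conj_phaseFourierCoeff (l m : ℝ)
    (hherm : ∀ u v : ℝ, f (-u, -v) = starRingEnd ℂ (f (u, v))) (j : ℤ) :
    starRingEnd ℂ (phaseFourierCoeff l m f j) = phaseFourierCoeff l m f j := by
  rw [phaseFourierCoeff, map_mul, Complex.conj_ofReal]
  congr 1
  refine conj_intervalIntegral_intervalIntegral_of_hermitian (fun u v => ?_) _ _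
  simp only [map_mul, hherm, ← Complex.exp_conj]
  simp [Complex.conj_ofNat, ← neg_add_rev, add_comm]

theorem one_dimensional_fourier_series_general (hl : l ≠ 0) (hm : m ≠ 0) {g' : ℝ → ℂ}
    (hper : ∀ v : ℝ, f (0, v + 1 / m) = f (0, v))
    (hline : ∀ u c : ℝ, f (u, -(l / m) * u + c) = f (0, c))
    (hcont : Continuous (phaseProfile m f))
    (hderiv : ∀ t ∈ Set.Ioo 0 1, HasDerivWithinAt (phaseProfile m f) (g' t) (Set.Ioi t) t)
    (hg' : MemLp g' 2 (volume.restrict (Set.Ioc 0 1))) (u v : ℝ) :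
    HasSum
      (fun j : ℤ => phaseFourierCoeff l m f j *
        Complex.exp (2 * (Real.pi : ℂ) * Complex.I * (j : ℂ) *
          ((u : ℂ) * (l : ℂ) + (v : ℂ) * (m : ℂ))))
      (f (u, v)) := by
  have hprofile := phaseProfile_apply_phase hm hline
  have hperiodic := periodic_phaseProfile hper
  have hsum := hasSum_fourierCoeff_lift_of_hasDeriv_right (a := 0) hperiodic hcont
    (by rwa [zero_add]) (by rwa [zero_add]) (u * l + v * m)
  rw [hprofile] at hsum
  simp_rw [phaseFourierCoeff_eq_fourierCoeff hl hm (F := hperiodic.lift) hprofile]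
  simpa only [fourier_coe_apply, Complex.ofReal_add, Complex.ofReal_mul, Complex.ofReal_one,
    div_one] using hsum

end Phase

/-- Proposition 3: a continuously differentiable function `f : ℝ² → ℂ` that is doubly
periodic with periods `1/l0` and `1/m0`, effectively one-dimensional (constant along
the lines `v = −(l0/m0)u + c`), and Hermitian (`f(−u,−v) = conj (f(u,v))`) admits an
effectively one-dimensional Fourier-series representation
`f(u,v) = Σ_{j∈ℤ} c_j · exp(2πi·j·(u·l0 + v·m0))` with real coefficients
`c_j = |l0||m0| ∫∫ f(u,v)·exp(−2πi·j·(u·l0 + v·m0)) du dv`, the series converging. -/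
theorem one_dimensional_fourier_series (l0 m0 : ℝ) (hl0 : l0 ≠ 0) (hm0 : m0 ≠ 0)
    (f : ℝ × ℝ → ℂ) (hf : ContDiff ℝ 1 f)
    (hper : ∀ (u v : ℝ) (j k : ℤ), f (u + j / l0, v + k / m0) = f (u, v))
    (hline : ∀ u c : ℝ, f (u, -(l0 / m0) * u + c) = f (0, c))
    (hherm : ∀ u v : ℝ, f (-u, -v) = starRingEnd ℂ (f (u, v))) :
    ∃ c : ℤ → ℝ,
      (∀ j : ℤ, ((c j : ℝ) : ℂ) =
        ((|l0| * |m0| : ℝ) : ℂ) *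
          ∫ v in (-(1 / (2 * |m0|)))..(1 / (2 * |m0|)),
            ∫ u in (-(1 / (2 * |l0|)))..(1 / (2 * |l0|)),
              f (u, v) *
                Complex.exp (-2 * (Real.pi : ℂ) * Complex.I * (j : ℂ) *
                  ((u : ℂ) * (l0 : ℂ) + (v : ℂ) * (m0 : ℂ)))) ∧
      (∀ u v : ℝ,
        HasSum
          (fun j : ℤ => ((c j : ℝ) : ℂ) *
            Complex.exp (2 * (Real.pi : ℂ) * Complex.I * (j : ℂ) *
              ((u : ℂ) * (l0 : ℂ) + (v : ℂ) * (m0 : ℂ))))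
          (f (u, v))) := by
  have hreal (j : ℤ) : ((phaseFourierCoeff l0 m0 f j).re : ℂ) = phaseFourierCoeff l0 m0 f j :=
    Complex.conj_eq_iff_re.mp (conj_phaseFourierCoeff l0 m0 hherm j)
  have hprofile : ContDiff ℝ 1 (phaseProfile m0 f) :=
    hf.comp (contDiff_const.prodMk (contDiff_id.div_const m0))
  refine ⟨fun j => (phaseFourierCoeff l0 m0 f j).re, hreal, fun u v => ?_⟩
  simp only [hreal]
  exact one_dimensional_fourier_series_general hl0 hm0
    (fun v => by simpa using hper 0 v 0 1) hline hprofile.continuous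
    (fun t _ => (hprofile.differentiable one_ne_zero t).hasDerivAt.hasDerivWithinAt)
    (memLp_two_restrict_Ioc_of_continuous (hprofile.continuous_deriv le_rfl) 0 1) u v
end
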